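/- A signature function σ on the triples of [n] can be realized as the signature function of a simple x-monotone drawing of K_n if and only if σ is admissible and, in addition, there is no 5-tuple a < b < c < d < e with σ(a,b,e) = σ(a,d,e) = σ(b,c,d) equal to the opposite sign of σ(a,c,e). -/

import Mathlib

/-- `Zval n` is Hill's conjectured value
`Z(n) = (1/4)⌊n/2⌋⌊(n−1)/2⌋⌊(n−2)/2⌋⌊(n−3)/2⌋` for the crossing number of `K n`.
(The product of the four floors is always divisible by 4, so natural division is exact.) -/
def Zval (n : ℕ) : ℕ :=
  n / 2 * ((n - 1) / 2) * ((n - 2) / 2) * ((n - 3) / 2) / 4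

/-- An x-monotone drawing of the complete graph `K n`: vertices `v i = (x i, 0)` with
`x` strictly increasing, and for each pair `i < j` a continuous function `e i j` on
`[x i, x j]` vanishing at the endpoints, whose graph is the arc of the edge `{i, j}`.
Edges avoid the intermediate vertices, any two distinct edges meet in finitely many
interior parameters, and at each such common point the difference changes sign
(a proper crossing). -/
structure XMonotoneDrawing (n : ℕ) where
  x : Fin n → ℝ
  x_strictMono : StrictMono x
  e : Fin n → Fin n → ℝ → ℝ
  cont : ∀ i j : Fin n, i < j → ContinuousOn (e i j) (Set.Icc (x i) (x j))
  end_left : ∀ i j : Fin n, i < j → e i j (x i) = 0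
  end_right : ∀ i j : Fin n, i < j → e i j (x j) = 0
  avoid_vertex : ∀ i m j : Fin n, i < m → m < j → e i j (x m) ≠ 0
  cross_finite : ∀ i j k l : Fin n, i < j → k < l → (i, j) ≠ (k, l) →
    {t : ℝ | max (x i) (x k) < t ∧ t < min (x j) (x l) ∧ e i j t = e k l t}.Finite
  sign_change : ∀ i j k l : Fin n, i < j → k < l → (i, j) ≠ (k, l) →
    ∀ t : ℝ, max (x i) (x k) < t → t < min (x j) (x l) → e i j t = e k l t →
      ∃ ε > (0 : ℝ), ∀ s : ℝ, max (x i) (x k) < s → t - ε < s → s < t →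
        ∀ u : ℝ, u < min (x j) (x l) → t < u → u < t + ε →
          (e i j s - e k l s) * (e i j u - e k l u) < 0

namespace XMonotoneDrawing

variable {n : ℕ}

/-- The set of parameters at which the edges `{i,j}` and `{k,l}` cross
(both edges are parametrized over the `x`-axis). -/
def crossSet (D : XMonotoneDrawing n) (i j k l : Fin n) : Set ℝ :=
  {t : ℝ | max (D.x i) (D.x k) < t ∧ t < min (D.x j) (D.x l) ∧ D.e i j t = D.e k l t}

/-- The number of crossings between the edges `{i,j}` and `{k,l}`. -/
noncomputable def crossCount (D : XMonotoneDrawing n) (i j k l : Fin n) : ℕ :=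
  (D.crossSet i j k l).ncard

/-- Two edges `{i,j}` and `{k,l}` are adjacent if they share an endpoint index. -/
def Adj (i j k l : Fin n) : Prop := i = k ∨ i = l ∨ j = k ∨ j = l

/-- A drawing is semisimple if no two adjacent edges cross. -/
def Semisimple (D : XMonotoneDrawing n) : Prop :=
  ∀ i j k l : Fin n, i < j → k < l → (i, j) ≠ (k, l) → Adj i j k l →
    D.crossCount i j k l = 0

/-- A drawing is weakly semisimple if every two adjacent edges cross an even
number of times. -/
def WeaklySemisimple (D : XMonotoneDrawing n) : Prop :=
  ∀ i j k l : Fin n, i < j → k < l → (i, j) ≠ (k, l) → Adj i j k l →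
    Even (D.crossCount i j k l)

/-- A drawing is simple if no two adjacent edges cross and every two non-adjacent
edges cross at most once. -/
def Simple (D : XMonotoneDrawing n) : Prop :=
  ∀ i j k l : Fin n, i < j → k < l → (i, j) ≠ (k, l) →
    (Adj i j k l → D.crossCount i j k l = 0) ∧
    (¬ Adj i j k l → D.crossCount i j k l ≤ 1)

/-- `cr D`: the total number of crossings of `D`. (Each unordered pair of distinct
edges is counted twice in the sum, whence the division by 2; `crossCount` is
symmetric in the two edges.) -/
noncomputable def cr (D : XMonotoneDrawing n) : ℕ :=
  (∑ p : (Fin n × Fin n) × (Fin n × Fin n),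
      if p.1.1 < p.1.2 ∧ p.2.1 < p.2.2 ∧ p.1 ≠ p.2 then
        D.crossCount p.1.1 p.1.2 p.2.1 p.2.2
      else 0) / 2

/-- `ocr D`: the number of unordered pairs of edges of `D` crossing an odd number
of times. (Each unordered pair appears twice as an ordered pair.) -/
noncomputable def ocr (D : XMonotoneDrawing n) : ℕ :=
  {p : (Fin n × Fin n) × (Fin n × Fin n) |
    p.1.1 < p.1.2 ∧ p.2.1 < p.2.2 ∧ p.1 ≠ p.2 ∧
      Odd (D.crossCount p.1.1 p.1.2 p.2.1 p.2.2)}.ncard / 2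

/-- The signature of the triple `i < j < k`: `true` (i.e. `+`) if the vertex `v j`
lies below the edge `{i, k}`, i.e. `e i k (x j) > 0`, and `false` (i.e. `−`) otherwise. -/
noncomputable def sig (D : XMonotoneDrawing n) (i j k : Fin n) : Bool :=
  if 0 < D.e i k (D.x j) then true else false

/-- `D` realizes the signature function `σ` if `σ_D` and `σ` agree on all
increasing triples. -/
def Realizes (D : XMonotoneDrawing n) (σ : Fin n → Fin n → Fin n → Bool) : Prop :=
  ∀ i j k : Fin n, i < j → j < k → D.sig i j k = σ i j k

/-- A drawing is pseudolinear if its edges extend to continuous curves over all of `ℝ`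
that avoid all vertices other than their endpoints and such that any two of these
extended curves cross exactly once (the crossing being a sign change of the difference). -/
def Pseudolinear (D : XMonotoneDrawing n) : Prop :=
  ∃ p : Fin n → Fin n → ℝ → ℝ,
    (∀ i j : Fin n, i < j → Continuous (p i j)) ∧
    (∀ i j : Fin n, i < j → ∀ t ∈ Set.Icc (D.x i) (D.x j), p i j t = D.e i j t) ∧
    (∀ i j m : Fin n, i < j → m ≠ i → m ≠ j → p i j (D.x m) ≠ 0) ∧
    (∀ i j k l : Fin n, i < j → k < l → (i, j) ≠ (k, l) →
      ∃ t : ℝ, p i j t = p k l t ∧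
        ∀ s u : ℝ, s < t → t < u →
          (p i j s - p k l s) * (p i j u - p k l u) < 0)

/-- The arc of the edge `{i, j}` as a subset of the plane `ℝ × ℝ`. -/
def edgeArc (D : XMonotoneDrawing n) (i j : Fin n) : Set (ℝ × ℝ) :=
  {q : ℝ × ℝ | D.x i ≤ q.1 ∧ q.1 ≤ D.x j ∧ q.2 = D.e i j q.1}

/-- The union of all edge arcs of the drawing. -/
def arcUnion (D : XMonotoneDrawing n) : Set (ℝ × ℝ) :=
  ⋃ i : Fin n, ⋃ j : Fin n, ⋃ (_ : i < j), D.edgeArc i j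

end XMonotoneDrawing

namespace Sig

variable {n : ℕ}

/-- With respect to a signature function `σ`, the vertex `m ∉ {i, j}` is on the left of
the directed edge `(i, j)` (where `i < j`). -/
def LeftOf (σ : Fin n → Fin n → Fin n → Bool) (i j m : Fin n) : Prop :=
  (i < m ∧ m < j ∧ σ i m j = false) ∨ (m < i ∧ σ m i j = true) ∨ (j < m ∧ σ i j m = true)

/-- The number of vertices on the left of the directed edge `(i, j)`. -/
noncomputable def leftCount (σ : Fin n → Fin n → Fin n → Bool) (i j : Fin n) : ℕ :=
  {m : Fin n | LeftOf σ i j m}.ncard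

/-- The edge `{i, j}` (with `i < j`) is a `k`-edge of `σ` if `min(ℓ, n − 2 − ℓ) = k`,
where `ℓ` is the number of vertices on its left. -/
def IsKEdge (σ : Fin n → Fin n → Fin n → Bool) (k : ℕ) (i j : Fin n) : Prop :=
  min (leftCount σ i j) (n - 2 - leftCount σ i j) = k

/-- `Ek σ k`: the number of `k`-edges of `σ`. -/
noncomputable def Ek (σ : Fin n → Fin n → Fin n → Bool) (k : ℕ) : ℕ :=
  {p : Fin n × Fin n | p.1 < p.2 ∧ IsKEdge σ k p.1 p.2}.ncard

/-- `Ele σ k = E_{≤k}(σ)`: the number of `≤k`-edges of `σ`. -/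
noncomputable def Ele (σ : Fin n → Fin n → Fin n → Bool) (k : ℕ) : ℕ :=
  ∑ i ∈ Finset.range (k + 1), Ek σ i

/-- `Elele σ k = E_{≤≤k}(σ) = Σ_{j=0}^{k} E_{≤j}(σ)`. -/
noncomputable def Elele (σ : Fin n → Fin n → Fin n → Bool) (k : ℕ) : ℕ :=
  ∑ j ∈ Finset.range (k + 1), Ele σ j

/-- `E_{≤≤k}` with an integer index, which vanishes for negative `k`. -/
noncomputable def ElelZ (σ : Fin n → Fin n → Fin n → Bool) (k : ℤ) : ℕ :=
  if 0 ≤ k then Elele σ k.toNat else 0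

/-- The left count of the edge `{i, j}` in the drawing restricted to the first
`n − 1` vertices (the last vertex deleted). -/
noncomputable def leftCountRes (σ : Fin n → Fin n → Fin n → Bool) (i j : Fin n) : ℕ :=
  {m : Fin n | LeftOf σ i j m ∧ (m : ℕ) + 1 < n}.ncard

/-- The edge `{i, j}` is a `k`-edge of the restriction of `σ` to the first `n − 1`
vertices (there `min(ℓ', (n−1) − 2 − ℓ') = k`). -/
def IsKEdgeRes (σ : Fin n → Fin n → Fin n → Bool) (k : ℕ) (i j : Fin n) : Prop :=
  min (leftCountRes σ i j) (n - 3 - leftCountRes σ i j) = k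

/-- The edge `{i, j}` is a `(D,D')`-invariant `≤k`-edge: it avoids the last vertex and
is an `m`-edge with `m ≤ k` both in `σ` and in the restriction of `σ` to the first
`n − 1` vertices. -/
def InvariantLeK (σ : Fin n → Fin n → Fin n → Bool) (k : ℕ) (i j : Fin n) : Prop :=
  (j : ℕ) + 1 < n ∧ (∃ m ≤ k, IsKEdge σ m i j) ∧ (∃ m ≤ k, IsKEdgeRes σ m i j)

/-- The ten 4-tuple forms allowed in signature functions of semisimple x-monotone
drawings: `++++, −−−−, ++−−, −−++, −++−, +−−+, −−−+, +++−, +−−−, −+++`. -/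
def AllowedForm (a b c d : Bool) : Prop :=
  (a, b, c, d) ∈ ([(true, true, true, true), (false, false, false, false),
    (true, true, false, false), (false, false, true, true),
    (false, true, true, false), (true, false, false, true),
    (false, false, false, true), (true, true, true, false),
    (true, false, false, false), (false, true, true, true)] :
      List (Bool × Bool × Bool × Bool))

/-- A signature function is admissible if every increasing 4-tuple is of one of the
ten allowed forms. -/
def Admissible (σ : Fin n → Fin n → Fin n → Bool) : Prop :=
  ∀ a b c d : Fin n, a < b → b < c → c < d →
    AllowedForm (σ a b c) (σ a b d) (σ a c d) (σ b c d)

/-- The six convex forms: `++++, −−−−, ++−−, −−++, −++−, +−−+`. -/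
def ConvexForm (a b c d : Bool) : Prop :=
  (a, b, c, d) ∈ ([(true, true, true, true), (false, false, false, false),
    (true, true, false, false), (false, false, true, true),
    (false, true, true, false), (true, false, false, true)] :
      List (Bool × Bool × Bool × Bool))

/-- The 4-tuple `a < b < c < d` is convex in `σ`. -/
def Convex4 (σ : Fin n → Fin n → Fin n → Bool) (a b c d : Fin n) : Prop :=
  ConvexForm (σ a b c) (σ a b d) (σ a c d) (σ b c d)

/-- The eight 4-tuple forms of pseudolinear x-monotone drawings (the sign-monotone
sequences): `++++, +++−, ++−−, +−−−, −−−−, −−−+, −−++, −+++`. -/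
def PLForm (a b c d : Bool) : Prop :=
  (a, b, c, d) ∈ ([(true, true, true, true), (true, true, true, false),
    (true, true, false, false), (true, false, false, false),
    (false, false, false, false), (false, false, false, true),
    (false, false, true, true), (false, true, true, true)] :
      List (Bool × Bool × Bool × Bool))

/-- The relation `j ⋖ k` on `{j : i < j}`: `j ⋖ k` iff (`j < k` and `σ i j k = +`)
or (`k < j` and `σ i k j = −`). -/
def Below (σ : Fin n → Fin n → Fin n → Bool) (i j k : Fin n) : Prop :=
  (j < k ∧ σ i j k = true) ∨ (k < j ∧ σ i k j = false)

end Sig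

/-! Let `side σ i j m` be `1`, `-1` or `0` according to whether the edge `{i, j}` passes above the
vertex `m`, below it, or not over it. Both conditions on `σ` together say that `σ` is *coherent*:
whenever `p < q < r` lie on `[k, l]` and the side of `{k, l}` at `q` differs from its sides at `p`
and at `r`, the edge `{p, r}` passes `q` on the same side as `{k, l}`. Otherwise `{p, r}` would have
to cross `{k, l}` both between `p` and `q` (unless `p = k`) and between `q` and `r` (unless
`r = l`), so simple drawings have coherent signatures.

Conversely, draw every edge as a polyline whose height at an interior vertex `m` orders the edges
lexicographically by their sides at `m, m - 1, m - 2, …`, ties being broken by the sides at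
`m + 1, m + 2, …`. Two edges then exchange their order only because of a vertex separating them.
If `{i, j}` is below `{k, l}` at a separating vertex `q` and not below it at vertices `p < q < r`,
coherence applied to `{i, j}` and to `{k, l}` gives opposite values of `σ p q r`; as common
endpoints may serve as `p` or `r`, edges sharing an endpoint do not cross at all, and other pairs
of edges cross at most once. -/

theorem mul_neg_of_sign_ne {R : Type*} [Ring R] [LinearOrder R] [IsStrictOrderedRing R] {u v : R}
    (hu : u ≠ 0) (hv : v ≠ 0) (h : SignType.sign u ≠ SignType.sign v) : u * v < 0 := by
  rcases hu.lt_or_gt with hu | hu <;> rcases hv.lt_or_gt with hv | hv <;>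
    simp [hu, hv, mul_neg_iff] at h ⊢

theorem mul_sub_neg_of_mul_neg {R : Type*} [Ring R] [LinearOrder R] [IsStrictOrderedRing R]
    {u v w : R} (huv : u * v < 0) (hvw : v * w < 0) : u * (v - w) < 0 := by
  rcases mul_neg_iff.mp huv with ⟨hu, hv⟩ | ⟨hu, hv⟩
  · have hw : 0 < w := pos_of_mul_neg_right hvw hv.le
    exact mul_neg_of_pos_of_neg hu (sub_neg.mpr (hv.trans hw))
  · have hw : w < 0 := neg_of_mul_neg_right hvw hv.le
    exact mul_neg_of_neg_of_pos hu (sub_pos.mpr (hw.trans hv))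

theorem sum_mul_pow_pos {ι : Type*} [Fintype ι] {B : ℤ} {c : ι → ℤ} {e : ι → ℕ} (hB : 1 ≤ B)
    (he : Function.Injective e) (hc : ∀ b, 1 - B ≤ c b) {a : ι} (ha : 1 ≤ c a)
    (hlt : ∀ b, e a < e b → 0 ≤ c b) : 0 < ∑ b, c b * B ^ e b := by
  classical
  have hpow (x : ℕ) : 0 < B ^ x := pow_pos (by lia) x
  have hgeom : ∑ b with e b < e a, B ^ e b ≤ ∑ x ∈ Finset.range (e a), B ^ x := by
    rw [← Finset.sum_image (f := fun x => B ^ x) he.injOn]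
    refine Finset.sum_le_sum_of_subset_of_nonneg ?_ fun x _ _ => (hpow x).le
    simp [Finset.image_subset_iff]
  have hterm (b : ι) : (if b = a then B ^ e b else 0) - (if e b < e a then B ^ e b else 0) * (B - 1)
      ≤ c b * B ^ e b := by
    have hb := hpow (e b)
    rcases lt_trichotomy (e b) (e a) with h | h | h
    · have hba : b ≠ a := fun hba => h.ne (congrArg e hba)
      simp only [hba, h, if_true, if_false]
      nlinarith [hc b]
    · obtain rfl := he h
      simp only [lt_irrefl, if_true, if_false]
      nlinarith
    · have hba : b ≠ a := fun hba => h.ne' (congrArg e hba)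
      simp only [hba, h.not_gt, if_false]
      nlinarith [hlt b h]
  calc
    0 < B ^ e a - (∑ b with e b < e a, B ^ e b) * (B - 1) := by
      nlinarith [geom_sum_mul B (e a)]
    _ = ∑ b, ((if b = a then B ^ e b else 0) - (if e b < e a then B ^ e b else 0) * (B - 1)) := by
      simp [Finset.sum_sub_distrib, Finset.sum_mul, Finset.sum_filter]
    _ ≤ ∑ b, c b * B ^ e b := Finset.sum_le_sum fun b _ => hterm b

section EndpointZero

variable {ι α : Type*} [LinearOrder ι] [Zero α] {f : ι → ι → ι → α} {i j k l : ι}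

theorem apply_max_ne_apply_max (hleft : ∀ i j, f i j i = 0)
    (hf : ∀ ⦃i m j⦄, i < m → m < j → f i j m ≠ 0) (hil : i < l) (hkj : k < j) (hik : i ≠ k) :
    f i j (max i k) ≠ f k l (max i k) := by
  rcases hik.lt_or_gt with hik | hki
  · simpa [hik.le, hleft] using hf hik hkj
  · simpa [hki.le, hleft] using (hf hki hil).symm

theorem apply_min_ne_apply_min (hright : ∀ i j, f i j j = 0)
    (hf : ∀ ⦃i m j⦄, i < m → m < j → f i j m ≠ 0) (hil : i < l) (hkj : k < j) (hjl : j ≠ l) :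
    f i j (min j l) ≠ f k l (min j l) := by
  rcases hjl.lt_or_gt with hjl | hlj
  · simpa [hjl.le, hright] using (hf hkj hjl).symm
  · simpa [hlj.le, hright] using hf hil hlj

end EndpointZero

namespace Sig

open SignType (sign)

variable {n : ℕ} {σ : Fin n → Fin n → Fin n → Bool} {i j k l m p q r : Fin n}

/-! ### Sides and coherence -/

/-- The side of the vertex `m` on which the edge `{i, j}` passes: `1` above, `-1` below, and `0`
when `m` is not strictly between `i` and `j`. -/
def side (σ : Fin n → Fin n → Fin n → Bool) (i j m : Fin n) : SignType :=
  if i < m ∧ m < j then (if σ i m j then 1 else -1) else 0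

@[simp]
theorem side_left (σ : Fin n → Fin n → Fin n → Bool) (i j : Fin n) : side σ i j i = 0 := by
  simp [side]

@[simp]
theorem side_right (σ : Fin n → Fin n → Fin n → Bool) (i j : Fin n) : side σ i j j = 0 := by
  simp [side]

theorem side_of_lt (him : i < m) (hmj : m < j) : side σ i j m = if σ i m j then 1 else -1 := by
  simp [side, him, hmj]

theorem side_of_le (hmi : m ≤ i) : side σ i j m = 0 := by
  simp [side, hmi.not_gt]

theorem side_ne_zero_iff : side σ i j m ≠ 0 ↔ i < m ∧ m < j := by
  unfold side
  split_ifs <;> simp [*]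

theorem side_eq_side_iff (hip : i < p) (hpj : p < j) (hkq : k < q) (hql : q < l) :
    side σ i j p = side σ k l q ↔ σ i p j = σ k q l := by
  rw [side_of_lt hip hpj, side_of_lt hkq hql]
  cases σ i p j <;> cases σ k q l <;> decide

/-- The common form of admissibility and of the absence of forbidden 5-tuples: if the side of
`{k, l}` at `q` differs from its sides at `p < q` and `r > q`, then `{p, r}` and `{k, l}` pass `q`
on the same side. As the side at an endpoint is `0`, the cases `p = k` and `r = l` are included;
they are conditions on 4-tuples. -/
def Coherent (σ : Fin n → Fin n → Fin n → Bool) : Prop :=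
  ∀ ⦃k p q r l : Fin n⦄, k ≤ p → p < q → q < r → r ≤ l →
    side σ k l p ≠ side σ k l q → side σ k l r ≠ side σ k l q → σ p q r = σ k q l

theorem allowedForm_iff (a b c d : Bool) : AllowedForm a b c d ↔ (b ≠ c → a = b ∧ d = c) := by
  cases a <;> cases b <;> cases c <;> cases d <;> simp [AllowedForm]

theorem Coherent.admissible (hσ : Coherent σ) : Admissible σ := by
  intro a b c d hab hbc hcd
  rw [allowedForm_iff]
  intro hne
  have hside : side σ a d b ≠ side σ a d c := by
    rwa [Ne, side_eq_side_iff hab (hbc.trans hcd) (hab.trans hbc) hcd]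
  have hb : side σ a d b ≠ 0 := side_ne_zero_iff.mpr ⟨hab, hbc.trans hcd⟩
  have hc : side σ a d c ≠ 0 := side_ne_zero_iff.mpr ⟨hab.trans hbc, hcd⟩
  exact ⟨hσ le_rfl hab hbc hcd.le (by simpa using hb.symm) hside.symm,
    hσ hab.le hbc hcd le_rfl hside (by simpa using hc.symm)⟩

theorem Coherent.eq_of_alternating (hσ : Coherent σ) {a b c d e : Fin n} (hab : a < b)
    (hbc : b < c) (hcd : c < d) (hde : d < e) (hb : σ a b e ≠ σ a c e) (hd : σ a d e ≠ σ a c e) :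
    σ b c d = σ a c e := by
  have hac := hab.trans hbc
  have hce := hcd.trans hde
  refine hσ hab.le hbc hcd hde.le ?_ ?_
  · rwa [Ne, side_eq_side_iff hab (hbc.trans hce) hac hce]
  · rwa [Ne, side_eq_side_iff (hac.trans hcd) hde hac hce]

theorem coherent_of_admissible (h₄ : Admissible σ)
    (h₅ : ∀ a b c d e : Fin n, a < b → b < c → c < d → d < e →
      σ a b e ≠ σ a c e → σ a d e ≠ σ a c e → σ b c d = σ a c e) : Coherent σ := by
  intro k p q r l hkp hpq hqr hrl hp hr
  have hkq := hkp.trans_lt hpq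
  have hql := hqr.trans_le hrl
  rcases hkp.eq_or_lt with rfl | hkp
  · rcases hrl.eq_or_lt with rfl | hrl
    · rfl
    · rw [Ne, side_eq_side_iff (hkq.trans hqr) hrl hkq hql] at hr
      exact ((allowedForm_iff ..).mp (h₄ _ _ _ _ hpq hqr hrl) (Ne.symm hr)).1
  · rw [Ne, side_eq_side_iff hkp (hpq.trans hql) hkq hql] at hp
    rcases hrl.eq_or_lt with rfl | hrl
    · exact ((allowedForm_iff ..).mp (h₄ _ _ _ _ hkp hpq hqr) hp).2
    · rw [Ne, side_eq_side_iff (hkq.trans hqr) hrl hkq hql] at hr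
      exact h₅ _ _ _ _ _ hkp hpq hqr hrl hp hr

theorem coherent_iff : Coherent σ ↔ Admissible σ ∧
    ¬ ∃ a b c d e : Fin n, a < b ∧ b < c ∧ c < d ∧ d < e ∧
      σ a b e = σ a d e ∧ σ b c d = σ a d e ∧ σ a c e = !(σ a d e) := by
  constructor
  · refine fun hσ => ⟨hσ.admissible, ?_⟩
    rintro ⟨a, b, c, d, e, hab, hbc, hcd, hde, hb, hbcd, hc⟩
    have := hσ.eq_of_alternating hab hbc hcd hde (by simp [hb, hc]) (by simp [hc])
    simp [hbcd, hc] at this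
  · rintro ⟨h₄, h₅⟩
    refine coherent_of_admissible h₄ fun a b c d e hab hbc hcd hde hb hd => ?_
    by_contra hne
    refine h₅ ⟨a, b, c, d, e, hab, hbc, hcd, hde, ?_⟩
    rw [Bool.eq_not_of_ne hb, Bool.eq_not_of_ne hd, Bool.eq_not_of_ne hne]
    simp

/-! ### Vertices separating two edges -/

theorem side_max_ne_side_max (hil : i < l) (hkj : k < j) (hik : i ≠ k) :
    side σ i j (max i k) ≠ side σ k l (max i k) :=
  apply_max_ne_apply_max (side_left σ) (fun _ _ _ him hmj => side_ne_zero_iff.mpr ⟨him, hmj⟩)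
    hil hkj hik

theorem side_min_ne_side_min (hil : i < l) (hkj : k < j) (hjl : j ≠ l) :
    side σ i j (min j l) ≠ side σ k l (min j l) :=
  apply_min_ne_apply_min (side_right σ) (fun _ _ _ him hmj => side_ne_zero_iff.mpr ⟨him, hmj⟩)
    hil hkj hjl

/-- Otherwise coherence for the two edges would give opposite values of `σ p q r`. -/
theorem Coherent.side_le_of_neg_one_lt_of_lt_one (hσ : Coherent σ) (hip : i ≤ p) (hkp : k ≤ p)
    (hpq : p < q) (hqr : q < r) (hrj : r ≤ j) (hrl : r ≤ l) (hip' : -1 < side σ i j p)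
    (hkp' : side σ k l p < 1) (hir' : -1 < side σ i j r) (hkr' : side σ k l r < 1) :
    side σ k l q ≤ side σ i j q := by
  by_contra! hq
  have hiq := side_of_lt (σ := σ) (hip.trans_lt hpq) (hqr.trans_le hrj)
  have hkq := side_of_lt (σ := σ) (hkp.trans_lt hpq) (hqr.trans_le hrl)
  have hσi : σ i q j = false := by
    by_contra h
    rw [hiq, if_pos (by simpa using h)] at hq
    exact (SignType.le_one _).not_gt hq
  have hσk : σ k q l = true := by
    by_contra h
    rw [hkq, if_neg h] at hq
    exact (SignType.neg_one_le _).not_gt hq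
  simp only [hσi, hσk, Bool.false_eq_true, if_true, if_false] at hiq hkq
  have h₁ := hσ hip hpq hqr hrj (hiq ▸ hip'.ne') (hiq ▸ hir'.ne')
  have h₂ := hσ hkp hpq hqr hrl (hkq ▸ hkp'.ne) (hkq ▸ hkr'.ne)
  exact Bool.false_ne_true (hσi.symm.trans (h₁.symm.trans (h₂.trans hσk)))

theorem Coherent.side_le_of_lt_of_lt (hσ : Coherent σ) (hip : i ≤ p) (hkp : k ≤ p)
    (hpq : p < q) (hqr : q < r) (hrj : r ≤ j) (hrl : r ≤ l) (hp : side σ k l p < side σ i j p)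
    (hr : side σ k l r < side σ i j r) : side σ k l q ≤ side σ i j q :=
  hσ.side_le_of_neg_one_lt_of_lt_one hip hkp hpq hqr hrj hrl ((SignType.neg_one_le _).trans_lt hp)
    (hp.trans_le (SignType.le_one _)) ((SignType.neg_one_le _).trans_lt hr)
    (hr.trans_le (SignType.le_one _))

theorem Coherent.side_le_of_lt_of_left_eq (hσ : Coherent σ) (hip : i ≤ p) (hpq : p < q)
    (hqj : q ≤ j) (hql : q ≤ l) (hp : side σ i l p < side σ i j p) :
    side σ i l q ≤ side σ i j q := by
  by_contra! hq
  have hip : i < p := hip.lt_of_ne (by rintro rfl; simp at hp)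
  exact hp.not_ge <| hσ.side_le_of_neg_one_lt_of_lt_one le_rfl le_rfl hip hpq hql hqj (by simp)
    (by simp) ((SignType.neg_one_le _).trans_lt hq) (hq.trans_le (SignType.le_one _))

theorem Coherent.side_le_of_lt_of_right_eq (hσ : Coherent σ) (hip : i ≤ p) (hkp : k ≤ p)
    (hpq : p < q) (hqj : q ≤ j) (hp : side σ k j p < side σ i j p) :
    side σ k j q ≤ side σ i j q := by
  rcases hqj.eq_or_lt with rfl | hqj
  · simp
  · exact hσ.side_le_of_neg_one_lt_of_lt_one hip hkp hpq hqj le_rfl le_rfl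
      ((SignType.neg_one_le _).trans_lt hp) (hp.trans_le (SignType.le_one _)) (by simp) (by simp)

/-! ### Heights -/

/-- The significance of the vertex `q` for the order of the edges over the vertex `m`: in
decreasing order `m, m - 1, …, 0, m + 1, m + 2, …`. -/
def priority (m q : Fin n) : ℕ :=
  if q ≤ m then n + q else n - q

theorem priority_injective (m : Fin n) : Function.Injective (priority m) := by
  intro p q h
  simp only [priority] at h
  split_ifs at h <;> omega

theorem priority_le_self (m q : Fin n) : priority m q ≤ priority m m := by
  simp only [priority]
  split_ifs <;> omega

theorem lt_and_le_of_priority_lt (hpm : p ≤ m) (h : priority m p < priority m q) :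
    p < q ∧ q ≤ m := by
  simp only [priority] at h
  split_ifs at h <;> omega

theorem lt_of_priority_lt (hmp : m ≤ p) (h : priority m p < priority m q) : q < p := by
  simp only [priority] at h
  split_ifs at h <;> omega

/-- A number comparing sign vectors lexicographically, the entries being taken in decreasing order
of their priority at `m`. Base `3` works because entries differ by at most `2`. -/
def lexSum (s : Fin n → SignType) (m : Fin n) : ℤ :=
  ∑ q, (s q : ℤ) * 3 ^ priority m q

variable {s t : Fin n → SignType} {a : Fin n}

theorem lexSum_lt_lexSum (ha : s a < t a) (h : ∀ q, priority m a < priority m q → s q ≤ t q) :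
    lexSum s m < lexSum t m := by
  have hle : ∀ x y : SignType, x ≤ y → (0 : ℤ) ≤ y - x := by decide
  have hlt : ∀ x y : SignType, x < y → (1 : ℤ) ≤ y - x := by decide
  have hge : ∀ x y : SignType, (-2 : ℤ) ≤ y - x := by decide
  rw [← sub_pos, lexSum, lexSum, ← Finset.sum_sub_distrib]
  simp only [← sub_mul]
  exact sum_mul_pow_pos (by lia) (priority_injective m) (fun _ => hge _ _) (hlt _ _ ha)
    fun q hq => hle _ _ (h q hq)

/-- The height over the vertex `m` of an edge passing the vertices on the sides `s`. -/
def signHeight (s : Fin n → SignType) (m : Fin n) : ℤ :=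
  if s m = 0 then 0 else lexSum s m

theorem sign_signHeight (s : Fin n → SignType) (m : Fin n) : sign (signHeight s m) = s m := by
  have hmax (q : Fin n) : ¬ priority m m < priority m q := (priority_le_self m q).not_gt
  have hzero : lexSum (0 : Fin n → SignType) m = 0 := by simp [lexSum]
  unfold signHeight
  split_ifs with h
  · simp [h]
  · rcases lt_or_gt_of_ne h with h | h
    · have := lexSum_lt_lexSum (t := 0) h fun q hq => absurd hq (hmax q)
      rw [sign_neg (hzero ▸ this), SignType.neg_iff.mp h]
    · have := lexSum_lt_lexSum (s := 0) h fun q hq => absurd hq (hmax q)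
      rw [sign_pos (hzero ▸ this), SignType.pos_iff.mp h]

theorem signHeight_eq_zero_iff : signHeight s m = 0 ↔ s m = 0 := by
  rw [← sign_eq_zero_iff, sign_signHeight]

theorem signHeight_le_signHeight (ha : s a < t a)
    (h : ∀ q, priority m a < priority m q → s q ≤ t q) : signHeight s m ≤ signHeight t m := by
  have hm : s m ≤ t m := by
    rcases (priority_le_self m a).eq_or_lt with h' | h'
    · exact (priority_injective m h' ▸ ha).le
    · exact h m h'
  rcases hm.lt_or_eq with hm | hm
  · refine (SignType.sign.monotone.reflect_lt ?_).le
    rwa [sign_signHeight, sign_signHeight]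
  · unfold signHeight
    rw [hm]
    split_ifs
    exacts [le_rfl, (lexSum_lt_lexSum ha h).le]

theorem signHeight_ne_signHeight (hst : s ≠ t) (hs : s m ≠ 0) (ht : t m ≠ 0) :
    signHeight s m ≠ signHeight t m := by
  obtain ⟨a, ha, hmax⟩ := Set.exists_max_image {q | s q ≠ t q} (priority m) (Set.toFinite _)
    (Function.ne_iff.mp hst)
  have heq : ∀ q, priority m a < priority m q → s q = t q := fun q hq =>
    by_contra fun hne => (hmax q hne).not_gt hq
  rw [signHeight, signHeight, if_neg hs, if_neg ht]
  rcases lt_or_gt_of_ne ha with ha | ha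
  · exact (lexSum_lt_lexSum ha fun q hq => (heq q hq).le).ne
  · exact (lexSum_lt_lexSum ha fun q hq => (heq q hq).ge).ne'

theorem exists_lt_of_signHeight_lt (hrm : r ≤ m) (hr : s r < t r)
    (hm : signHeight t m < signHeight s m) : ∃ p, r < p ∧ p ≤ m ∧ t p < s p := by
  by_contra! h
  refine hm.not_ge (signHeight_le_signHeight hr fun q hq => ?_)
  obtain ⟨hrq, hqm⟩ := lt_and_le_of_priority_lt hrm hq
  exact h q hrq hqm

theorem side_ne_side (hil : i < l) (hkj : k < j) (hne : (i, j) ≠ (k, l)) :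
    side σ i j ≠ side σ k l := by
  intro h
  by_cases hik : i = k
  · exact side_min_ne_side_min (σ := σ) hil hkj (fun hjl => hne (Prod.ext hik hjl)) (congrFun h _)
  · exact side_max_ne_side_max hil hkj hik (congrFun h _)

theorem signHeight_side_le_of_side_le (him : i ≤ m) (hkm : k ≤ m) (hmj : m ≤ j) (hml : m ≤ l)
    (hil : i < l) (hkj : k < j)
    (hle : ∀ q, i ≤ q → k ≤ q → q ≤ j → q ≤ l → side σ i j q ≤ side σ k l q) :
    signHeight (side σ i j) m ≤ signHeight (side σ k l) m := by
  by_cases hik : i = k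
  · subst hik
    by_cases hjl : j = l
    · rw [hjl]
    have hmin : i ≤ min j l := le_min hkj.le hil.le
    refine signHeight_le_signHeight (a := min j l)
      ((hle _ hmin hmin (min_le_left _ _) (min_le_right _ _)).lt_of_ne
        (side_min_ne_side_min hil hkj hjl)) fun q hq => ?_
    have hq' := lt_min_iff.mp (lt_of_priority_lt (le_min hmj hml) hq)
    rcases le_total q i with hqi | hiq
    · rw [side_of_le hqi, side_of_le hqi]
    · exact hle q hiq hiq hq'.1.le hq'.2.le
  · have him' : max i k ≤ m := max_le him hkm
    refine signHeight_le_signHeight (a := max i k)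
      ((hle _ (le_max_left _ _) (le_max_right _ _) (him'.trans hmj) (him'.trans hml)).lt_of_ne
        (side_max_ne_side_max hil hkj hik)) fun q hq => ?_
    obtain ⟨hq', hqm⟩ := lt_and_le_of_priority_lt him' hq
    rw [max_lt_iff] at hq'
    exact hle q hq'.1.le hq'.2.le (hqm.trans hmj) (hqm.trans hml)

theorem exists_side_lt_of_signHeight_lt (him : i ≤ m) (hkm : k ≤ m) (hmj : m ≤ j) (hml : m ≤ l)
    (hil : i < l) (hkj : k < j) (hm : signHeight (side σ k l) m < signHeight (side σ i j) m) :
    ∃ q, i ≤ q ∧ k ≤ q ∧ q ≤ j ∧ q ≤ l ∧ side σ k l q < side σ i j q := by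
  by_contra! h
  exact hm.not_ge (signHeight_side_le_of_side_le him hkm hmj hml hil hkj h)

theorem Coherent.signHeight_le_of_lt_of_common_endpoint (hσ : Coherent σ) (hij : i < j)
    (hkl : k < l) (h : i = k ∨ j = l) (hip : i ≤ p) (hkp : k ≤ p) (hpj : p ≤ j) (hpl : p ≤ l)
    (hiq : i ≤ q) (hkq : k ≤ q) (hqj : q ≤ j) (hql : q ≤ l)
    (hp : signHeight (side σ k l) p < signHeight (side σ i j) p) :
    signHeight (side σ k l) q ≤ signHeight (side σ i j) q := by
  have hil : i < l := by grind
  have hkj : k < j := by grind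
  by_contra! hq
  obtain ⟨a, hia, hka, haj, hal, ha⟩ :=
    exists_side_lt_of_signHeight_lt hip hkp hpj hpl hil hkj hp
  obtain ⟨b, hkb, hib, hbl, hbj, hb⟩ :=
    exists_side_lt_of_signHeight_lt hkq hiq hql hqj hkj hil hq
  rcases lt_trichotomy a b with hab | rfl | hba
  · rcases h with rfl | rfl
    · exact hb.not_ge (hσ.side_le_of_lt_of_left_eq hia hab hbj hbl ha)
    · exact hb.not_ge (hσ.side_le_of_lt_of_right_eq hia hka hab hbj ha)
  · exact ha.asymm hb
  · rcases h with rfl | rfl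
    · exact ha.not_ge (hσ.side_le_of_lt_of_left_eq hib hba hal haj hb)
    · exact ha.not_ge (hσ.side_le_of_lt_of_right_eq hkb hib hba hal hb)

theorem Coherent.signHeight_le_of_lt_of_lt (hσ : Coherent σ) (hik : i ≠ k) (hip : i ≤ p)
    (hkp : k ≤ p) (hpq : p < q) (hqr : q < r) (hrj : r ≤ j) (hrl : r ≤ l)
    (hp : signHeight (side σ k l) p < signHeight (side σ i j) p)
    (hr : signHeight (side σ k l) r < signHeight (side σ i j) r) :
    signHeight (side σ k l) q ≤ signHeight (side σ i j) q := by
  by_contra! hq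
  have hap : max i k ≤ p := max_le hip hkp
  have hil : i < l := hip.trans_lt (hpq.trans (hqr.trans_le hrl))
  have hkj : k < j := hkp.trans_lt (hpq.trans (hqr.trans_le hrj))
  have hia := le_max_left i k
  have hka := le_max_right i k
  rcases lt_or_gt_of_ne (side_max_ne_side_max (σ := σ) hil hkj hik) with ha | ha
  · obtain ⟨b, hab, hbp, hb⟩ := exists_lt_of_signHeight_lt hap ha hp
    obtain ⟨c, hbc, hcq, hc⟩ := exists_lt_of_signHeight_lt (hbp.trans hpq.le) hb hq
    exact hb.not_ge (hσ.side_le_of_lt_of_lt hka hia hab hbc (hcq.trans (hqr.le.trans hrl))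
      (hcq.trans (hqr.le.trans hrj)) ha hc)
  · obtain ⟨b, hab, hbq, hb⟩ := exists_lt_of_signHeight_lt (hap.trans hpq.le) ha hq
    obtain ⟨c, hbc, hcr, hc⟩ := exists_lt_of_signHeight_lt (hbq.trans hqr.le) hb hr
    exact hb.not_ge (hσ.side_le_of_lt_of_lt hia hka hab hbc (hcr.trans hrj) (hcr.trans hrl) ha hc)

end Sig

/-! ### Polylines -/

section Polyline

variable {n : ℕ} {H : Fin n → ℝ} {a b p q p' q' : Fin n} {t u : ℝ}

/-- The polyline through the points `(m, H m)`, written as a sum of hat functions. -/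
noncomputable def polyline (H : Fin n → ℝ) (t : ℝ) : ℝ :=
  ∑ m, H m * max 0 (1 - |t - (m : ℕ)|)

theorem continuous_polyline (H : Fin n → ℝ) : Continuous (polyline H) := by
  unfold polyline
  fun_prop

theorem polyline_sub (H K : Fin n → ℝ) (t : ℝ) :
    polyline (H - K) t = polyline H t - polyline K t := by
  simp [polyline, sub_mul]

theorem polyline_eq (hpq : (p : ℕ) + 1 = q) (hpt : (p : ℕ) ≤ t) (htq : t ≤ (q : ℕ)) :
    polyline H t = H p * ((q : ℕ) - t) + H q * (t - (p : ℕ)) := by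
  have hq : ((q : ℕ) : ℝ) = (p : ℕ) + 1 := by rw [← hpq, Nat.cast_succ]
  have hne : p ≠ q := by rintro rfl; omega
  rw [polyline, Fintype.sum_eq_add p q hne]
  · rw [abs_of_nonneg (sub_nonneg.mpr hpt), abs_of_nonpos (sub_nonpos.mpr htq),
      max_eq_right (by linarith), max_eq_right (by linarith), hq]
    ring
  · rintro m ⟨hmp, hmq⟩
    rw [max_eq_left, mul_zero]
    rcases lt_or_gt_of_ne hmp with h | h
    · have : ((m : ℕ) : ℝ) + 1 ≤ (p : ℕ) := by exact_mod_cast h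
      linarith [le_abs_self (t - (m : ℕ))]
    · have : ((q : ℕ) : ℝ) + 1 ≤ (m : ℕ) := by exact_mod_cast (by omega : (q : ℕ) + 1 ≤ m)
      linarith [neg_le_abs (t - (m : ℕ))]

theorem polyline_natCast (H : Fin n → ℝ) (m : Fin n) : polyline H (m : ℕ) = H m := by
  rw [polyline, Fintype.sum_eq_single m]
  · simp
  · intro k hk
    have hk : ((m : ℕ) : ℤ) - (k : ℕ) ≠ 0 := by omega
    have : (1 : ℝ) ≤ |((m : ℕ) : ℝ) - (k : ℕ)| := by exact_mod_cast Int.one_le_abs hk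
    rw [max_eq_left (by linarith), mul_zero]

/-- The polyline through the points `(m, H m)` crosses zero at `t`, between the consecutive
vertices `p` and `q`. -/
structure IsCrossing (H : Fin n → ℝ) (p q : Fin n) (t : ℝ) : Prop where
  succ_eq : (p : ℕ) + 1 = q
  left_lt : (p : ℕ) < t
  lt_right : t < (q : ℕ)
  mul_neg : H p * H q < 0
  polyline_eq_zero : polyline H t = 0

theorem isCrossing_of_polyline_eq_zero (hpq : (p : ℕ) + 1 = q) (hpt : (p : ℕ) < t)
    (htq : t < (q : ℕ)) (hH : H p ≠ 0 ∨ H q ≠ 0) (ht : polyline H t = 0) :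
    IsCrossing H p q t := by
  refine ⟨hpq, hpt, htq, ?_, ht⟩
  rw [polyline_eq hpq hpt.le htq.le] at ht
  have hpt := sub_pos.mpr hpt
  have htq := sub_pos.mpr htq
  have hHp : H p ≠ 0 := fun h => by
    rw [h, zero_mul, zero_add, mul_eq_zero, or_iff_left hpt.ne'] at ht
    exact hH.elim (· h) (· ht)
  have hmul : H p * H q * (t - (p : ℕ)) = -(H p ^ 2 * ((q : ℕ) - t)) := by
    linear_combination H p * ht
  refine neg_of_mul_neg_left ?_ hpt.le
  rw [hmul]
  exact neg_neg_of_pos (mul_pos (sq_pos_of_ne_zero hHp) htq)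

theorem exists_isCrossing (hat : (a : ℕ) < t) (htb : t < (b : ℕ))
    (hH : ∀ m, a < m → m < b → H m ≠ 0) (hab : H a ≠ 0 ∨ H b ≠ 0) (ht : polyline H t = 0) :
    ∃ p q, a ≤ p ∧ q ≤ b ∧ IsCrossing H p q t := by
  have ht₀ : 0 ≤ t := (Nat.cast_nonneg _).trans hat.le
  have hap : (a : ℕ) ≤ ⌊t⌋₊ := Nat.le_floor hat.le
  have hqb : ⌊t⌋₊ + 1 ≤ (b : ℕ) := (Nat.floor_lt ht₀).mpr htb
  obtain ⟨p, hp⟩ : ∃ p : Fin n, (p : ℕ) = ⌊t⌋₊ := ⟨⟨⌊t⌋₊, by lia⟩, rfl⟩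
  obtain ⟨q, hq⟩ : ∃ q : Fin n, (q : ℕ) = ⌊t⌋₊ + 1 := ⟨⟨⌊t⌋₊ + 1, by lia⟩, rfl⟩
  rw [← hp] at hap hq
  rw [← hp, ← hq] at hqb
  have htq : t < (q : ℕ) := by
    rw [hq, hp]
    exact_mod_cast Nat.lt_floor_add_one t
  have hpt : (p : ℕ) < t := by
    refine lt_of_le_of_ne (hp ▸ Nat.floor_le ht₀) fun hpt => hH p ?_ ?_ ?_
    · exact_mod_cast hpt ▸ hat
    · exact Fin.lt_def.mpr (by lia)
    · rw [← polyline_natCast H p, hpt, ht]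
  refine ⟨p, q, hap, hqb, isCrossing_of_polyline_eq_zero hq.symm hpt htq ?_ ht⟩
  rcases (Fin.le_def.mpr hap).eq_or_lt with rfl | hap
  · rcases (Fin.le_def.mpr hqb).eq_or_lt with rfl | hqb
    · exact hab
    · exact .inr (hH q (Fin.lt_def.mpr (by lia)) hqb)
  · exact .inl (hH p hap (Fin.lt_def.mpr (by lia)))

namespace IsCrossing

theorem lt (h : IsCrossing H p q t) : p < q := by
  rw [Fin.lt_def, ← h.succ_eq]
  exact Nat.lt_succ_self _

theorem polyline_eq_mul (h : IsCrossing H p q t) (hpu : (p : ℕ) ≤ u) (huq : u ≤ (q : ℕ)) :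
    polyline H u = (H q - H p) * (u - t) := by
  have ht := h.polyline_eq_zero
  rw [polyline_eq h.succ_eq h.left_lt.le h.lt_right.le] at ht
  rw [polyline_eq h.succ_eq hpu huq]
  linear_combination ht

theorem height_ne (h : IsCrossing H p q t) : H q ≠ H p := fun h' =>
  h.mul_neg.not_ge (h' ▸ mul_self_nonneg _)

theorem sign_change (h : IsCrossing H p q t) : ∃ ε > (0 : ℝ), ∀ s u : ℝ,
    t - ε < s → s < t → t < u → u < t + ε → polyline H s * polyline H u < 0 := by
  refine ⟨min (t - (p : ℕ)) ((q : ℕ) - t), lt_min (sub_pos.mpr h.left_lt)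
    (sub_pos.mpr h.lt_right), fun s u hs hst htu hu => ?_⟩
  have hp := min_le_left (t - (p : ℕ)) ((q : ℕ) - t)
  have hq := min_le_right (t - (p : ℕ)) ((q : ℕ) - t)
  rw [h.polyline_eq_mul (by linarith) (by linarith [h.lt_right]),
    h.polyline_eq_mul (by linarith [h.left_lt]) (by linarith), mul_mul_mul_comm]
  exact mul_neg_of_pos_of_neg (mul_self_pos.mpr (sub_ne_zero.mpr h.height_ne))
    (mul_neg_of_neg_of_pos (sub_neg.mpr hst) (sub_pos.mpr htu))

theorem eq_of_left_eq (h : IsCrossing H p q t) (h' : IsCrossing H p q' u) : t = u := by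
  obtain rfl : q = q' := Fin.ext (h.succ_eq.symm.trans h'.succ_eq)
  have hu := h.polyline_eq_mul h'.left_lt.le h'.lt_right.le
  rw [h'.polyline_eq_zero, eq_comm, mul_eq_zero, sub_eq_zero, sub_eq_zero] at hu
  exact (hu.resolve_left h.height_ne).symm

theorem right_le_left (h : IsCrossing H p q t) (h' : IsCrossing H p' q' u) (htu : t < u) :
    q ≤ p' := by
  have hle : (p : ℕ) ≤ p' := Nat.lt_succ_iff.mp <| by
    rw [Nat.succ_eq_add_one, h'.succ_eq]
    exact_mod_cast (h.left_lt.trans htu).trans h'.lt_right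
  have hne : (p : ℕ) ≠ p' := by
    intro hp
    obtain rfl := Fin.ext hp
    exact htu.ne (h.eq_of_left_eq h')
  exact Fin.le_def.mpr (h.succ_eq ▸ hle.lt_of_ne hne)

end IsCrossing

theorem finite_setOf_isCrossing (H : Fin n → ℝ) : {t | ∃ p q, IsCrossing H p q t}.Finite := by
  rw [Set.ofPred_exists]
  refine Set.finite_iUnion fun p => Set.Subsingleton.finite ?_
  rintro t ⟨q, ht⟩ u ⟨q', hu⟩
  exact ht.eq_of_left_eq hu

theorem subsingleton_setOf_isCrossing (h : ∀ ⦃p q r⦄, a ≤ p → p < q → q < r → r ≤ b →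
    H p * H q < 0 → 0 ≤ H q * H r) :
    {t | ∃ p q, a ≤ p ∧ q ≤ b ∧ IsCrossing H p q t}.Subsingleton := by
  rw [← Set.not_nontrivial_iff, Set.nontrivial_iff_exists_lt]
  rintro ⟨t, ⟨p, q, hap, -, ht⟩, u, ⟨p', q', -, hqb, hu⟩, htu⟩
  have hpq : p < q := ht.lt
  have hpq' : p' < q' := hu.lt
  have hqp' : q ≤ p' := ht.right_le_left hu htu
  have h₁ : 0 ≤ H q * H p' := by
    rcases hqp'.eq_or_lt with rfl | hqp'
    · exact mul_self_nonneg _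
    · exact h hap hpq hqp' (hpq'.le.trans hqb) ht.mul_neg
  have h₂ : 0 ≤ H q * H q' := h hap hpq (hqp'.trans_lt hpq') hqb ht.mul_neg
  have hq : H q ≠ 0 := right_ne_zero_of_mul ht.mul_neg.ne
  have := mul_neg_of_pos_of_neg (mul_self_pos.mpr hq) hu.mul_neg
  linarith [mul_nonneg h₁ h₂]

end Polyline

/-! ### Polyline drawings -/

/-- The heights over the vertices of edges that form an x-monotone drawing when drawn as polylines:
`height i j m` is the height of the edge `{i, j}` over the vertex `m`. -/
structure EdgeHeights (n : ℕ) where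
  height : Fin n → Fin n → Fin n → ℝ
  height_left : ∀ i j, height i j i = 0
  height_right : ∀ i j, height i j j = 0
  height_ne_zero : ∀ ⦃i m j⦄, i < m → m < j → height i j m ≠ 0
  height_ne_height : ∀ ⦃i j k l m⦄, (i, j) ≠ (k, l) → i < m → m < j → k < m → m < l →
    height i j m ≠ height k l m

namespace EdgeHeights

variable {n : ℕ} (h : EdgeHeights n) {i j k l : Fin n} {t : ℝ}

theorem exists_isCrossing_of_polyline_eq (hne : (i, j) ≠ (k, l))
    (hl : max ((i : ℕ) : ℝ) (k : ℕ) < t) (hr : t < min ((j : ℕ) : ℝ) (l : ℕ))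
    (ht : polyline (h.height i j) t = polyline (h.height k l) t) :
    ∃ p q, max i k ≤ p ∧ q ≤ min j l ∧ IsCrossing (h.height i j - h.height k l) p q t := by
  have hil : i < l := by
    exact_mod_cast ((le_max_left _ _).trans_lt hl).trans (hr.trans_le (min_le_right _ _))
  have hkj : k < j := by
    exact_mod_cast ((le_max_right _ _).trans_lt hl).trans (hr.trans_le (min_le_left _ _))
  refine exists_isCrossing ?_ ?_ (fun m hm hm' => ?_) ?_ ?_
  · rwa [Fin.coe_max, Nat.cast_max]
  · rwa [Fin.coe_min, Nat.cast_min]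
  · rw [max_lt_iff] at hm
    rw [lt_min_iff] at hm'
    exact sub_ne_zero.mpr (h.height_ne_height hne hm.1 hm'.1 hm.2 hm'.2)
  · simp only [Pi.sub_apply, sub_ne_zero]
    by_cases hik : i = k
    · exact .inr (apply_min_ne_apply_min h.height_right h.height_ne_zero hil hkj
        fun hjl => hne (Prod.ext hik hjl))
    · exact .inl (apply_max_ne_apply_max h.height_left h.height_ne_zero hil hkj hik)
  · rw [polyline_sub, ht, sub_self]

/-- The drawing with vertices `(m, 0)` whose edges are the polylines with the given heights. -/
noncomputable def drawing : XMonotoneDrawing n where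
  x m := (m : ℕ)
  x_strictMono _ _ hij := Nat.cast_lt.mpr hij
  e i j := polyline (h.height i j)
  cont _ _ _ := (continuous_polyline _).continuousOn
  end_left i j _ := by rw [polyline_natCast, h.height_left]
  end_right i j _ := by rw [polyline_natCast, h.height_right]
  avoid_vertex i m j him hmj := by
    rw [polyline_natCast]
    exact h.height_ne_zero him hmj
  cross_finite i j k l _ _ hne := by
    refine (finite_setOf_isCrossing (h.height i j - h.height k l)).subset ?_
    rintro t ⟨hl, hr, ht⟩
    obtain ⟨p, q, -, -, hpq⟩ := h.exists_isCrossing_of_polyline_eq hne hl hr ht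
    exact ⟨p, q, hpq⟩
  sign_change i j k l _ _ hne t hl hr ht := by
    obtain ⟨p, q, -, -, hpq⟩ := h.exists_isCrossing_of_polyline_eq hne hl hr ht
    obtain ⟨ε, hε, hsign⟩ := hpq.sign_change
    refine ⟨ε, hε, fun s _ hs hst u _ htu hu => ?_⟩
    rw [← polyline_sub, ← polyline_sub]
    exact hsign s u hs hst htu hu

theorem exists_isCrossing_of_mem_crossSet (hne : (i, j) ≠ (k, l))
    (ht : t ∈ h.drawing.crossSet i j k l) :
    ∃ p q, max i k ≤ p ∧ q ≤ min j l ∧ IsCrossing (h.height i j - h.height k l) p q t :=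
  h.exists_isCrossing_of_polyline_eq hne ht.1 ht.2.1 ht.2.2

theorem crossSet_drawing_eq_empty (hne : (i, j) ≠ (k, l))
    (hle : ∀ ⦃p q⦄, max i k ≤ p → p ≤ min j l → max i k ≤ q → q ≤ min j l →
      h.height k l p < h.height i j p → h.height k l q ≤ h.height i j q) :
    h.drawing.crossSet i j k l = ∅ := by
  refine Set.eq_empty_of_forall_notMem fun t ht => ?_
  obtain ⟨p, q, hp, hq, hpq⟩ := h.exists_isCrossing_of_mem_crossSet hne ht
  have hle' : p ≤ q := hpq.lt.le
  rcases mul_neg_iff.mp hpq.mul_neg with ⟨hp', hq'⟩ | ⟨hp', hq'⟩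
  · exact (sub_neg.mp hq').not_ge
      (hle hp (hle'.trans hq) (hp.trans hle') hq (sub_pos.mp hp'))
  · exact (sub_neg.mp hp').not_ge
      (hle (hp.trans hle') hq hp (hle'.trans hq) (sub_pos.mp hq'))

theorem crossSet_drawing_subsingleton (hne : (i, j) ≠ (k, l))
    (hle : ∀ ⦃p q r⦄, max i k ≤ p → p < q → q < r → r ≤ min j l →
      h.height k l p < h.height i j p → h.height k l r < h.height i j r →
      h.height k l q ≤ h.height i j q)
    (hge : ∀ ⦃p q r⦄, max i k ≤ p → p < q → q < r → r ≤ min j l →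
      h.height i j p < h.height k l p → h.height i j r < h.height k l r →
      h.height i j q ≤ h.height k l q) :
    (h.drawing.crossSet i j k l).Subsingleton := by
  refine (subsingleton_setOf_isCrossing fun p q r hp hpq hqr hr hmul => ?_).anti
    fun t ht => h.exists_isCrossing_of_mem_crossSet hne ht
  rcases mul_neg_iff.mp hmul with ⟨hp', hq'⟩ | ⟨hp', hq'⟩
  · refine mul_nonneg_of_nonpos_of_nonpos hq'.le (sub_nonpos.mpr ?_)
    by_contra! hr'
    exact (sub_neg.mp hq').not_ge (hle hp hpq hqr hr (sub_pos.mp hp') hr')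
  · refine mul_nonneg hq'.le (sub_nonneg.mpr ?_)
    by_contra! hr'
    exact (sub_pos.mp hq').not_ge (hge hp hpq hqr hr (sub_neg.mp hp') hr')

end EdgeHeights

/-! ### Signatures of simple drawings are coherent -/

namespace XMonotoneDrawing

open SignType (sign)

variable {n : ℕ} {D : XMonotoneDrawing n} {σ : Fin n → Fin n → Fin n → Bool}
  {i j k l p q r : Fin n}

theorem crossSet_eq_empty_of_le (h : l ≤ i ∨ j ≤ k) : D.crossSet i j k l = ∅ := by
  refine Set.eq_empty_of_forall_notMem fun t ⟨hl, hr, _⟩ => ?_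
  rw [max_lt_iff] at hl
  rw [lt_min_iff] at hr
  rcases h with h | h
  · exact (hl.1.trans hr.2).not_ge (D.x_strictMono.monotone h)
  · exact (hl.2.trans hr.1).not_ge (D.x_strictMono.monotone h)

theorem simple_iff : D.Simple ↔ ∀ i j k l : Fin n, i < j → k < l → (i, j) ≠ (k, l) →
    (Adj i j k l → D.crossSet i j k l = ∅) ∧ (D.crossSet i j k l).Subsingleton := by
  refine forall₄_congr fun i j k l => forall₃_congr fun hij hkl hne => ?_
  have hfin : (D.crossSet i j k l).Finite := D.cross_finite i j k l hij hkl hne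
  have := hfin.to_subtype
  rw [crossCount, Set.ncard_eq_zero hfin, Set.ncard_le_one_iff_subsingleton]
  by_cases hadj : Adj i j k l
  · simp +contextual [hadj]
  · simp [hadj]

theorem realizes_iff : D.Realizes σ ↔ ∀ i m j : Fin n, i < m → m < j →
    sign (D.e i j (D.x m)) = Sig.side σ i j m := by
  refine forall₃_congr fun i m j => forall₂_congr fun him hmj => ?_
  rw [Sig.side_of_lt him hmj, sig]
  rcases (D.avoid_vertex i m j him hmj).lt_or_gt with h | h
  · cases σ i m j <;> simp [h, h.not_gt]
  · cases σ i m j <;> simp [h]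

theorem exists_mem_crossSet (hij : i < j) (hkl : k < l) (hip : i ≤ p) (hkp : k ≤ p) (hpq : p < q)
    (hqj : q ≤ j) (hql : q ≤ l)
    (h : (D.e i j (D.x p) - D.e k l (D.x p)) * (D.e i j (D.x q) - D.e k l (D.x q)) < 0) :
    ∃ t ∈ D.crossSet i j k l, D.x p < t ∧ t < D.x q := by
  have hx := D.x_strictMono.monotone
  have hcont : ContinuousOn (fun t => D.e i j t - D.e k l t) (Set.Icc (D.x p) (D.x q)) :=
    ((D.cont i j hij).mono (Set.Icc_subset_Icc (hx hip) (hx hqj))).sub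
      ((D.cont k l hkl).mono (Set.Icc_subset_Icc (hx hkp) (hx hql)))
  have hpq := (D.x_strictMono hpq).le
  obtain ⟨t, ⟨hpt, htq⟩, ht⟩ : (0 : ℝ) ∈ (fun t => D.e i j t - D.e k l t) ''
      Set.Ioo (D.x p) (D.x q) := by
    rcases mul_neg_iff.mp h with ⟨hp, hq⟩ | ⟨hp, hq⟩
    · exact intermediate_value_Ioo' hpq hcont ⟨hq, hp⟩
    · exact intermediate_value_Ioo hpq hcont ⟨hp, hq⟩
  exact ⟨t, ⟨max_lt ((hx hip).trans_lt hpt) ((hx hkp).trans_lt hpt),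
    lt_min (htq.trans_le (hx hqj)) (htq.trans_le (hx hql)), sub_eq_zero.mp ht⟩, hpt, htq⟩

theorem Realizes.e_mul_e_neg (hσ : D.Realizes σ) (hip : i < p) (hpj : p < j) (hkq : k < q)
    (hql : q < l) (h : Sig.side σ i j p ≠ Sig.side σ k l q) :
    D.e i j (D.x p) * D.e k l (D.x q) < 0 := by
  rw [← realizes_iff.mp hσ i p j hip hpj, ← realizes_iff.mp hσ k q l hkq hql] at h
  exact mul_neg_of_sign_ne (D.avoid_vertex _ _ _ hip hpj) (D.avoid_vertex _ _ _ hkq hql) h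

theorem Realizes.exists_mem_crossSet_left (hσ : D.Realizes σ) (hkp : k < p) (hpq : p < q)
    (hqr : q < r) (hrl : r ≤ l) (hp : Sig.side σ k l p ≠ Sig.side σ k l q)
    (hq : σ p q r ≠ σ k q l) : ∃ t ∈ D.crossSet k l p r, t < D.x q := by
  have hkq := hkp.trans hpq
  have hql := hqr.trans_le hrl
  have hpr := hpq.trans hqr
  have hq := (Sig.side_eq_side_iff hkq hql hpq hqr).not.mpr hq.symm
  obtain ⟨t, ht, -, htq⟩ :=
    exists_mem_crossSet (hkq.trans hql) hpr hkp.le le_rfl hpq hql.le hqr.le <| by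
      rw [D.end_left p r hpr, sub_zero]
      exact mul_sub_neg_of_mul_neg (hσ.e_mul_e_neg hkp (hpq.trans hql) hkq hql hp)
        (hσ.e_mul_e_neg hkq hql hpq hqr hq)
  exact ⟨t, ht, htq⟩

theorem Realizes.exists_mem_crossSet_right (hσ : D.Realizes σ) (hkp : k ≤ p) (hpq : p < q)
    (hqr : q < r) (hrl : r < l) (hr : Sig.side σ k l r ≠ Sig.side σ k l q)
    (hq : σ p q r ≠ σ k q l) : ∃ t ∈ D.crossSet k l p r, D.x q < t := by
  have hkq := hkp.trans_lt hpq
  have hql := hqr.trans hrl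
  have hpr := hpq.trans hqr
  have hq := (Sig.side_eq_side_iff hkq hql hpq hqr).not.mpr hq.symm
  obtain ⟨t, ht, hqt, -⟩ :=
    exists_mem_crossSet (hkq.trans hql) hpr hkq.le hpq.le hqr hrl.le le_rfl <| by
      rw [D.end_right p r hpr, sub_zero, mul_comm]
      exact mul_sub_neg_of_mul_neg (hσ.e_mul_e_neg (hkq.trans hqr) hrl hkq hql hr)
        (hσ.e_mul_e_neg hkq hql hpq hqr hq)
  exact ⟨t, ht, hqt⟩

theorem Simple.coherent (hD : D.Simple) (hσ : D.Realizes σ) : Sig.Coherent σ := by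
  intro k p q r l hkp hpq hqr hrl hp hr
  by_contra hq
  have hpr : p < r := hpq.trans hqr
  have hne : (k, l) ≠ (p, r) := by
    rintro ⟨⟩
    exact hq rfl
  obtain ⟨hadj, hsub⟩ := simple_iff.mp hD k l p r (hkp.trans_lt (hpr.trans_le hrl)) hpr hne
  rcases hkp.eq_or_lt with hkp' | hkp'
  · have hrl' : r < l := hrl.lt_of_ne fun hrl' => hne (by rw [hkp', hrl'])
    obtain ⟨t, ht, -⟩ := hσ.exists_mem_crossSet_right hkp hpq hqr hrl' hr hq
    exact Set.notMem_empty t (hadj (.inl hkp') ▸ ht)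
  · obtain ⟨t, ht, htq⟩ := hσ.exists_mem_crossSet_left hkp' hpq hqr hrl hp hq
    rcases hrl.eq_or_lt with hrl' | hrl'
    · exact Set.notMem_empty t (hadj (.inr (.inr (.inr hrl'.symm))) ▸ ht)
    · obtain ⟨u, hu, hqu⟩ := hσ.exists_mem_crossSet_right hkp hpq hqr hrl' hr hq
      exact (htq.trans hqu).ne (hsub ht hu)

end XMonotoneDrawing

/-! ### Drawings of coherent signature functions -/

namespace Sig

variable {n : ℕ} {σ : Fin n → Fin n → Fin n → Bool}

/-- The heights given by the lexicographic order of the sides of the edges. -/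
def edgeHeights (σ : Fin n → Fin n → Fin n → Bool) : EdgeHeights n where
  height i j m := signHeight (side σ i j) m
  height_left i j := by simp [signHeight]
  height_right i j := by simp [signHeight]
  height_ne_zero i m j him hmj := by
    rw [Int.cast_ne_zero, Ne, signHeight_eq_zero_iff]
    exact side_ne_zero_iff.mpr ⟨him, hmj⟩
  height_ne_height i j k l m hne him hmj hkm hml := by
    rw [Ne, Int.cast_inj]
    exact signHeight_ne_signHeight (side_ne_side (him.trans hml) (hkm.trans hmj) hne)
      (side_ne_zero_iff.mpr ⟨him, hmj⟩) (side_ne_zero_iff.mpr ⟨hkm, hml⟩)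

theorem realizes_drawing_edgeHeights (σ : Fin n → Fin n → Fin n → Bool) :
    (edgeHeights σ).drawing.Realizes σ := by
  refine XMonotoneDrawing.realizes_iff.mpr fun i m j _ _ => ?_
  simp only [EdgeHeights.drawing, polyline_natCast, edgeHeights, sign_intCast, sign_signHeight]

theorem Coherent.simple_drawing_edgeHeights (hσ : Coherent σ) :
    (edgeHeights σ).drawing.Simple := by
  rw [XMonotoneDrawing.simple_iff]
  intro i j k l hij hkl hne
  have hempty (h : i = k ∨ j = l) : (edgeHeights σ).drawing.crossSet i j k l = ∅ := by
    refine (edgeHeights σ).crossSet_drawing_eq_empty hne ?_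
    simp only [edgeHeights, Int.cast_lt, Int.cast_le, max_le_iff, le_min_iff]
    rintro p q ⟨hip, hkp⟩ ⟨hpj, hpl⟩ ⟨hiq, hkq⟩ ⟨hqj, hql⟩
    exact hσ.signHeight_le_of_lt_of_common_endpoint hij hkl h hip hkp hpj hpl hiq hkq hqj hql
  constructor
  · rintro (h | h | h | h)
    · exact hempty (.inl h)
    · exact XMonotoneDrawing.crossSet_eq_empty_of_le (.inl h.ge)
    · exact XMonotoneDrawing.crossSet_eq_empty_of_le (.inr h.le)
    · exact hempty (.inr h)
  · by_cases hik : i = k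
    · simp [hempty (.inl hik)]
    · refine (edgeHeights σ).crossSet_drawing_subsingleton hne ?_ ?_ <;>
        simp only [edgeHeights, Int.cast_lt, Int.cast_le, max_le_iff, le_min_iff]
      · rintro p q r ⟨hip, hkp⟩ hpq hqr ⟨hrj, hrl⟩
        exact hσ.signHeight_le_of_lt_of_lt hik hip hkp hpq hqr hrj hrl
      · rintro p q r ⟨hip, hkp⟩ hpq hqr ⟨hrj, hrl⟩
        exact hσ.signHeight_le_of_lt_of_lt (Ne.symm hik) hkp hip hpq hqr hrl hrj

end Sig

/-- A signature function `σ` on the triples of `[n]` is realizable by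
a simple x-monotone drawing of `K n` if and only if `σ` is admissible and there is no
5-tuple `a < b < c < d < e` with `σ(a,b,e) = σ(a,d,e) = σ(b,c,d)` equal to the opposite
of `σ(a,c,e)`. -/
theorem simple_realizable_iff_admissible_and_no_forbidden_5tuple (n : ℕ)
    (σ : Fin n → Fin n → Fin n → Bool) :
    (∃ D : XMonotoneDrawing n, D.Simple ∧ D.Realizes σ) ↔
      (Sig.Admissible σ ∧
        ¬ ∃ a b c d e : Fin n, a < b ∧ b < c ∧ c < d ∧ d < e ∧
          σ a b e = σ a d e ∧ σ b c d = σ a d e ∧ σ a c e = !(σ a d e)) := by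
  rw [← Sig.coherent_iff]
  constructor
  · rintro ⟨D, hD, hσ⟩
    exact hD.coherent hσ
  · intro hσ
    exact ⟨(Sig.edgeHeights σ).drawing, hσ.simple_drawing_edgeHeights,
      Sig.realizes_drawing_edgeHeights σ⟩
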